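/- Let α > −1 and β < α + 1 be real numbers. Then for every x > 0, ∫₀ˣ t^{−β} J_α(t) dt = x^{α−β+1} / (2^α (α−β+1) Γ(α+1)) · ₁F₂((α−β+1)/2; α+1, (α−β+3)/2; −x²/4), where ₁F₂(a; b, c; z) = Σ_{k=0}^{∞} (a)_k / (k! (b)_k (c)_k) z^k. -/

import Mathlib

open Real

/-- Pochhammer symbol `(a)_k = a (a+1) ⋯ (a+k-1)` for a real number `a`. -/
noncomputable def poch (a : ℝ) (k : ℕ) : ℝ := ∏ i ∈ Finset.range k, (a + i)

/-- The generalized hypergeometric series `₁F₂(a; b, c; z)`. -/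
noncomputable def oneF2 (a b c z : ℝ) : ℝ :=
  ∑' k : ℕ, poch a k / ((k.factorial : ℝ) * poch b k * poch c k) * z ^ k

/-- The Bessel function of the first kind of real order `α`. -/
noncomputable def besselJ (α : ℝ) (t : ℝ) : ℝ :=
  ∑' k : ℕ, (-1 : ℝ) ^ k / ((k.factorial : ℝ) * Real.Gamma (α + k + 1)) *
    (t / 2) ^ (2 * (k : ℝ) + α)

/-!
Multiplying the Bessel series by `t ^ (-β)` gives a series of powers `t ^ (2 * k + α - β)`, whose
exponents all exceed `-1` because `β < α + 1`. Integrating it term by term divides the `k`-th term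
by `2 * k + α - β + 1 = 2 * (a + k)`, where `a = (α - β + 1) / 2`. The identity
`(a)_k / (a + 1)_k = a / (a + k)` turns this division into the pair of parameters `a`, `a + 1` of
the hypergeometric series, whose absolute convergence justifies the interchange, and
`Γ(α + 1 + k) = Γ(α + 1) * (α + 1)_k` gives the remaining parameter.
-/

open Filter MeasureTheory Topology

section Pochhammer

theorem poch_zero (a : ℝ) : poch a 0 = 1 := Finset.prod_range_zero _

theorem poch_succ (a : ℝ) (k : ℕ) : poch a (k + 1) = poch a k * (a + k) :=
  Finset.prod_range_succ _ _

theorem poch_succ_left (a : ℝ) (k : ℕ) : poch a (k + 1) = a * poch (a + 1) k := by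
  simp only [poch, Finset.prod_range_succ', Nat.cast_add, Nat.cast_one, Nat.cast_zero, add_zero,
    add_assoc, add_comm (1 : ℝ), mul_comm a]

theorem poch_ne_zero {a : ℝ} (ha : ∀ m : ℕ, a ≠ -m) (k : ℕ) : poch a k ≠ 0 :=
  Finset.prod_ne_zero_iff.2 fun m _ => mt eq_neg_of_add_eq_zero_left (ha m)

theorem poch_div_poch_add_one {a : ℝ} (ha : ∀ m : ℕ, a ≠ -m) (k : ℕ) :
    poch a k / poch (a + 1) k = a / (a + k) := by
  have hsucc : a * poch (a + 1) k = poch a k * (a + k) := by rw [← poch_succ_left, poch_succ]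
  have hpoch : poch (a + 1) k ≠ 0 :=
    right_ne_zero_of_mul (poch_succ_left a k ▸ poch_ne_zero ha (k + 1))
  have hadd : a + k ≠ 0 := mt eq_neg_of_add_eq_zero_left (ha k)
  rw [div_eq_div_iff hpoch hadd, hsucc]

theorem Gamma_add_natCast_eq_mul_poch {a : ℝ} (ha : ∀ m : ℕ, a ≠ -m) (k : ℕ) :
    Gamma (a + k) = Gamma a * poch a k := by
  induction k with
  | zero => simp only [Nat.cast_zero, add_zero, poch_zero, mul_one]
  | succ k ih =>
    have hadd : a + k ≠ 0 := mt eq_neg_of_add_eq_zero_left (ha k)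
    rw [Nat.cast_succ, ← add_assoc, Gamma_add_one hadd, ih, poch_succ]
    ring

end Pochhammer

section Hypergeometric

/-- The `k`-th term of the series `oneF2 a b c z` defining `₁F₂(a; b, c; z)`. -/
noncomputable def oneF2Term (a b c z : ℝ) (k : ℕ) : ℝ :=
  poch a k / ((k.factorial : ℝ) * poch b k * poch c k) * z ^ k

theorem oneF2Term_succ (a b c z : ℝ) (k : ℕ) :
    oneF2Term a b c z (k + 1) =
      (a + k) / (b + k) * (1 / (c + k)) * (z / (1 + k)) * oneF2Term a b c z k := by
  simp only [oneF2Term, poch_succ, Nat.factorial_succ, Nat.cast_mul, Nat.cast_succ, pow_succ,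
    div_eq_mul_inv, mul_inv, add_comm (k : ℝ) 1]
  ring

theorem tendsto_oneF2Term_ratio (a b c z : ℝ) :
    Tendsto (fun k : ℕ => (a + k) / (b + k) * (1 / (c + k)) * (z / (1 + k))) atTop (𝓝 0) := by
  have h_one : Tendsto (fun k : ℕ => (a + k) / (b + k)) atTop (𝓝 1) := by
    simpa only [one_mul, div_one] using
      tendsto_add_mul_div_add_mul_atTop_nhds a b 1 one_ne_zero
  have h_zero (u v : ℝ) : Tendsto (fun k : ℕ => u / (v + k)) atTop (𝓝 0) := by
    simpa only [zero_mul, one_mul, add_zero, zero_div] using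
      tendsto_add_mul_div_add_mul_atTop_nhds u v 0 one_ne_zero
  simpa only [mul_zero] using (h_one.mul (h_zero 1 c)).mul (h_zero z 1)

theorem summable_oneF2Term (a b c z : ℝ) : Summable (oneF2Term a b c z) := by
  refine summable_of_ratio_norm_eventually_le (r := 1 / 2) (by norm_num) ?_
  have h_ratio := (tendsto_oneF2Term_ratio a b c z).norm
  rw [norm_zero] at h_ratio
  filter_upwards [h_ratio.eventually_le_const one_half_pos] with k hk
  rw [oneF2Term_succ, norm_mul]
  gcongr

end Hypergeometric

section TermwiseIntegration

theorem integral_zero_rpow {p : ℝ} (hp : -1 < p) (x : ℝ) :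
    ∫ t in (0 : ℝ)..x, t ^ p = x ^ (p + 1) / (p + 1) := by
  rw [integral_rpow (Or.inl hp), zero_rpow (neg_lt_iff_pos_add.1 hp).ne', sub_zero]

variable {ι E : Type*} [NormedAddCommGroup E] [NormedSpace ℝ E]

theorem integral_zero_norm_rpow_smul {p x : ℝ} (hp : -1 < p) (hx : 0 ≤ x) (c : E) :
    ∫ t in (0 : ℝ)..x, ‖t ^ p • c‖ = ‖(x ^ (p + 1) / (p + 1)) • c‖ := by
  have h_nonneg : 0 ≤ x ^ (p + 1) / (p + 1) :=
    div_nonneg (rpow_nonneg hx _) (neg_lt_iff_pos_add.1 hp).le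
  calc ∫ t in (0 : ℝ)..x, ‖t ^ p • c‖
      = ∫ t in (0 : ℝ)..x, t ^ p * ‖c‖ := by
        refine intervalIntegral.integral_congr fun t ht => ?_
        rw [Set.uIcc_of_le hx] at ht
        simp only [norm_smul, norm_of_nonneg (rpow_nonneg ht.1 p)]
    _ = ‖(x ^ (p + 1) / (p + 1)) • c‖ := by
        rw [intervalIntegral.integral_mul_const, integral_zero_rpow hp, norm_smul,
          norm_of_nonneg h_nonneg]

theorem integral_tsum_rpow_smul [Countable ι] [CompleteSpace E] {p : ι → ℝ} {c : ι → E} {x : ℝ}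
    (hp : ∀ i, -1 < p i) (hx : 0 ≤ x)
    (hsum : Summable fun i => ‖(x ^ (p i + 1) / (p i + 1)) • c i‖) :
    ∫ t in (0 : ℝ)..x, ∑' i, t ^ p i • c i = ∑' i, (x ^ (p i + 1) / (p i + 1)) • c i := by
  have h_integrable (i : ι) : IntegrableOn (fun t => t ^ p i • c i) (Set.Ioc 0 x) :=
    ((intervalIntegrable_iff_integrableOn_Ioc_of_le hx).1
      (intervalIntegral.intervalIntegrable_rpow' (hp i))).smul_const (c i)
  simp only [← integral_zero_norm_rpow_smul (hp _) hx, intervalIntegral.integral_of_le hx] at hsum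
  rw [intervalIntegral.integral_of_le hx,
    ← integral_tsum_of_summable_integral_norm h_integrable hsum]
  refine tsum_congr fun i => ?_
  rw [← intervalIntegral.integral_of_le hx, intervalIntegral.integral_smul_const,
    integral_zero_rpow (hp i)]

end TermwiseIntegration

section Bessel

/-- The coefficient of `t ^ (2 * k + α)` in the series of the Bessel function `J_α(t)`. -/
noncomputable def besselCoeff (α : ℝ) (k : ℕ) : ℝ :=
  (-1 : ℝ) ^ k / ((k.factorial : ℝ) * Gamma (α + k + 1)) / 2 ^ (2 * (k : ℝ) + α)

theorem rpow_mul_besselJ (α ν : ℝ) {t : ℝ} (ht : 0 < t) :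
    t ^ ν * besselJ α t = ∑' k : ℕ, t ^ (2 * (k : ℝ) + (α + ν)) • besselCoeff α k := by
  rw [besselJ, ← tsum_mul_left]
  refine tsum_congr fun k => ?_
  rw [← add_assoc, rpow_add ht _ ν, div_rpow ht.le zero_le_two, besselCoeff, smul_eq_mul]
  ring

theorem besselCoeff_eq {α : ℝ} (hα : ∀ m : ℕ, α + 1 ≠ -m) (k : ℕ) :
    besselCoeff α k =
      (-1 / 4) ^ k / ((k.factorial : ℝ) * poch (α + 1) k) / (2 ^ α * Gamma (α + 1)) := by
  have h_gamma : Gamma (α + k + 1) = Gamma (α + 1) * poch (α + 1) k := by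
    rw [add_right_comm, Gamma_add_natCast_eq_mul_poch hα]
  have h_two : (2 : ℝ) ^ (2 * (k : ℝ) + α) = 4 ^ k * 2 ^ α := by
    rw [rpow_add two_pos, rpow_mul zero_le_two, rpow_natCast]
    norm_num
  rw [besselCoeff, h_gamma, h_two, div_pow]
  simp only [div_eq_mul_inv, mul_inv]
  ring

theorem rpow_div_smul_besselCoeff {α ν x : ℝ} (hα : ∀ m : ℕ, α + 1 ≠ -m)
    (hν : ∀ m : ℕ, (ν + 1) / 2 ≠ -m) (hx : 0 < x) (k : ℕ) :
    (x ^ (2 * (k : ℝ) + ν + 1) / (2 * (k : ℝ) + ν + 1)) • besselCoeff α k =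
      x ^ (ν + 1) / (2 ^ α * (ν + 1) * Gamma (α + 1)) *
        oneF2Term ((ν + 1) / 2) (α + 1) ((ν + 3) / 2) (-x ^ 2 / 4) k := by
  have h_pow : x ^ (2 * (k : ℝ) + ν + 1) = (x ^ 2) ^ k * x ^ (ν + 1) := by
    rw [add_assoc, rpow_add hx, rpow_mul hx.le, rpow_natCast, rpow_two]
  have h_ratio : 1 / (2 * (k : ℝ) + ν + 1) =
      1 / (ν + 1) * (poch ((ν + 1) / 2) k / poch ((ν + 3) / 2) k) := by
    have hν₀ : ν + 1 ≠ 0 := by simpa using hν 0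
    have h_succ : (ν + 3) / 2 = (ν + 1) / 2 + 1 := by ring
    rw [h_succ, poch_div_poch_add_one hν]
    field_simp
    ring
  have h_arg : -x ^ 2 / 4 = x ^ 2 * (-1 / 4) := by ring
  rw [← mul_one_div, h_pow, h_ratio, besselCoeff_eq hα, oneF2Term, h_arg, mul_pow]
  simp only [div_eq_mul_inv, mul_inv, smul_eq_mul]
  ring

end Bessel

theorem stmt7_general (α β : ℝ) (hα : ∀ m : ℕ, α + 1 ≠ -m) (hβ : β < α + 1) :
    ∀ x : ℝ, 0 < x →
      ∫ t in (0 : ℝ)..x, t ^ (-β) * besselJ α t =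
        x ^ (α - β + 1) / ((2 : ℝ) ^ α * (α - β + 1) * Real.Gamma (α + 1)) *
          oneF2 ((α - β + 1) / 2) (α + 1) ((α - β + 3) / 2) (-x ^ 2 / 4) := by
  intro x hx
  have hν (m : ℕ) : (α - β + 1) / 2 ≠ -m := by linarith [m.cast_nonneg (α := ℝ)]
  have hp (k : ℕ) : -1 < 2 * (k : ℝ) + (α - β) := by linarith [k.cast_nonneg (α := ℝ)]
  have h_term := rpow_div_smul_besselCoeff hα hν hx
  have h_summable : Summable fun k : ℕ =>
      (x ^ (2 * (k : ℝ) + (α - β) + 1) / (2 * (k : ℝ) + (α - β) + 1)) • besselCoeff α k := by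
    simp only [h_term]
    exact (summable_oneF2Term _ _ _ _).mul_left _
  calc ∫ t in (0 : ℝ)..x, t ^ (-β) * besselJ α t
      = ∫ t in (0 : ℝ)..x, ∑' k : ℕ, t ^ (2 * (k : ℝ) + (α - β)) • besselCoeff α k :=
        intervalIntegral.integral_congr_Ioo_of_le hx.le fun t ht => rpow_mul_besselJ α (-β) ht.1
    _ = ∑' k : ℕ, (x ^ (2 * (k : ℝ) + (α - β) + 1) / (2 * (k : ℝ) + (α - β) + 1)) •
          besselCoeff α k := integral_tsum_rpow_smul hp hx.le h_summable.norm
    _ = _ := (tsum_congr h_term).trans tsum_mul_left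

theorem stmt7 (α β : ℝ) (hα : -1 < α) (hβ : β < α + 1) :
    ∀ x : ℝ, 0 < x →
      ∫ t in (0 : ℝ)..x, t ^ (-β) * besselJ α t =
        x ^ (α - β + 1) / ((2 : ℝ) ^ α * (α - β + 1) * Real.Gamma (α + 1)) *
          oneF2 ((α - β + 1) / 2) (α + 1) ((α - β + 3) / 2) (-x ^ 2 / 4) :=
  stmt7_general α β (fun m => by linarith [m.cast_nonneg (α := ℝ)]) hβ
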